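/- arXiv:1605.01790 — 2 statements merged into one kernel-verified Lean document; each statement's English description precedes it below -/
import Mathlib

section
/- Let S ∈ ℂ^{pq×pq}, and let B ∈ ℂ^{q×q} with B ≠ 0. Define R_A ∈ ℂ^{p×p} entrywise by (R_A)_{ij} := tr(B^H S(i,j)) / ‖B‖_F². Then for every A ∈ ℂ^{p×p}: ‖S − A⊗B‖_F² = ‖B‖_F² ‖A − R_A‖_F² + ‖S‖_F² − ‖B‖_F² ‖R_A‖_F². -/
open Matrix Kronecker BigOperators

/-- Squared Frobenius norm of a complex matrix. -/
noncomputable def frobSq {m n : Type*} [Fintype m] [Fintype n] (M : Matrix m n ℂ) : ℝ :=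
  ∑ i, ∑ j, Complex.normSq (M i j)

/-- The (i,j)-th q×q block of a pq×pq matrix. -/
def blk {p q : ℕ} (S : Matrix (Fin p × Fin q) (Fin p × Fin q) ℂ) (i j : Fin p) :
    Matrix (Fin q) (Fin q) ℂ := Matrix.of fun k l => S (i, k) (j, l)

/-! Both sides are expanded with the Frobenius inner product `⟪Y, X⟫ = tr (Yᴴ * X)`. The map
`A ↦ A ⊗ₖ B` multiplies squared norms by `‖B‖²`, and its adjoint sends `S` to the matrix of inner
products `⟪B, S(i,j)⟫`, which is `‖B‖² • R_A`. The identity is thus a completed square. -/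

section

variable {m n k l : Type*} [Fintype m] [Fintype n] [Fintype k] [Fintype l]

theorem trace_conjTranspose_mul_eq_sum {R : Type*} [AddCommMonoid R] [Mul R] [Star R]
    (X Y : Matrix m n R) :
    (Xᴴ * Y).trace = ∑ i, ∑ j, star (X i j) * Y i j := by
  simp only [trace, diag, mul_apply, conjTranspose_apply]
  exact Finset.sum_comm

theorem ofReal_frobSq (M : Matrix m n ℂ) : (frobSq M : ℂ) = (Mᴴ * M).trace := by
  simp [trace_conjTranspose_mul_eq_sum, frobSq, Complex.normSq_eq_conj_mul_self]

open scoped ComplexOrder in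
theorem frobSq_ne_zero {M : Matrix m n ℂ} (hM : M ≠ 0) : frobSq M ≠ 0 := by
  rwa [← Complex.ofReal_ne_zero, ofReal_frobSq, Ne, trace_conjTranspose_mul_self_eq_zero_iff]

theorem frobSq_sub_comm (X Y : Matrix m n ℂ) : frobSq (X - Y) = frobSq (Y - X) := by
  simp only [frobSq, Matrix.sub_apply, Complex.normSq_eq_norm_sq, norm_sub_rev]

theorem frobSq_sub (X Y : Matrix m n ℂ) :
    frobSq (X - Y) = frobSq X + frobSq Y - 2 * (Yᴴ * X).trace.re := by
  simp only [trace_conjTranspose_mul_eq_sum, frobSq, Complex.re_sum, Finset.mul_sum,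
    ← Finset.sum_add_distrib, ← Finset.sum_sub_distrib, Matrix.sub_apply, Complex.normSq_sub]
  simp only [mul_comm, Complex.star_def]

theorem frobSq_kronecker (A : Matrix m n ℂ) (B : Matrix k l ℂ) :
    frobSq (A ⊗ₖ B) = frobSq A * frobSq B := by
  rw [← Complex.ofReal_inj, Complex.ofReal_mul]
  simp only [ofReal_frobSq, conjTranspose_kronecker, ← mul_kronecker_mul, trace_kronecker]

theorem trace_conjTranspose_kronecker_mul {R : Type*} [CommSemiring R] [StarRing R]
    (A : Matrix m n R) (B : Matrix k l R) (S : Matrix (m × k) (n × l) R) :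
    ((A ⊗ₖ B)ᴴ * S).trace =
      (Aᴴ * ((comp m n k l R).symm S).map fun T => (Bᴴ * T).trace).trace := by
  simp only [trace_conjTranspose_mul_eq_sum, Fintype.sum_prod_type, kroneckerMap_apply, map_apply,
    comp_symm_apply, star_mul', Finset.mul_sum, mul_assoc]
  exact Finset.sum_congr rfl fun i _ => Finset.sum_comm

theorem frobSq_sub_kronecker_eq_of_RA_general (S : Matrix (m × k) (n × l) ℂ) (B : Matrix k l ℂ)
    (hB : B ≠ 0) (RA : Matrix m n ℂ)
    (hRA : RA = of fun i j => (Bᴴ * (comp m n k l ℂ).symm S i j).trace / (frobSq B : ℂ))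
    (A : Matrix m n ℂ) :
    frobSq (S - A ⊗ₖ B) =
      frobSq B * frobSq (A - RA) + frobSq S - frobSq B * frobSq RA := by
  have hB' : (frobSq B : ℂ) ≠ 0 := Complex.ofReal_ne_zero.mpr (frobSq_ne_zero hB)
  have block_traces :
      (((comp m n k l ℂ).symm S).map fun T => (Bᴴ * T).trace) = (frobSq B : ℂ) • RA := by
    ext i j
    simp only [hRA, map_apply, Matrix.smul_apply, of_apply, smul_eq_mul, mul_div_cancel₀ _ hB']
  have cross_term : ((A ⊗ₖ B)ᴴ * S).trace.re = frobSq B * (Aᴴ * RA).trace.re := by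
    rw [trace_conjTranspose_kronecker_mul, block_traces, Matrix.mul_smul, trace_smul, smul_eq_mul,
      Complex.re_ofReal_mul]
  rw [frobSq_sub_comm A RA, frobSq_sub, frobSq_sub, frobSq_kronecker, cross_term]
  ring

end

/-- For fixed nonzero B, with (R_A)ᵢⱼ = tr(Bᴴ S(i,j)) / ‖B‖_F², the objective decomposes as
‖S − A⊗B‖_F² = ‖B‖_F² ‖A − R_A‖_F² + ‖S‖_F² − ‖B‖_F² ‖R_A‖_F² for every A. -/
theorem frobSq_sub_kronecker_eq_of_RA {p q : ℕ}
    (S : Matrix (Fin p × Fin q) (Fin p × Fin q) ℂ)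
    (B : Matrix (Fin q) (Fin q) ℂ) (hB : B ≠ 0)
    (RA : Matrix (Fin p) (Fin p) ℂ)
    (hRA : RA = Matrix.of fun i j => (Bᴴ * blk S i j).trace / (frobSq B : ℂ))
    (A : Matrix (Fin p) (Fin p) ℂ) :
    frobSq (S - A ⊗ₖ B) =
      frobSq B * frobSq (A - RA) + frobSq S - frobSq B * frobSq RA :=
  frobSq_sub_kronecker_eq_of_RA_general S B hB RA hRA A
end

section
/- Let S ∈ ℂ^{pq×pq} be Hermitian positive semidefinite, let A ∈ ℂ^{p×p} be Hermitian positive semidefinite with A ≠ 0, and let 1 ≤ r_b ≤ q. Define R_B := (Σ_{i,j=1}^p conj(a_{ij}) S(i,j)) / ‖A‖_F² (which is Hermitian positive semidefinite) and B̂ := EIG_{r_b}(R_B). Then for every B ∈ ℂ^{q×q} with rank(B) ≤ r_b: ‖S − A⊗B̂‖_F ≤ ‖S − A⊗B‖_F. -/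
open Matrix Kronecker BigOperators ComplexOrder

/-! The matrix `R = R_B` solves the normal equations of the least-squares problem
`B ↦ ‖S − A ⊗ B‖_F`, so by Pythagoras `‖S − A ⊗ B‖² = ‖S − A ⊗ R‖² + ‖A‖² ‖R − B‖²` and only the
best low-rank approximation of `R` matters. For `R = ∑ σᵢ uᵢ vᵢᴴ` and `B` with range `K`, Bessel's
inequality and projection to `Kᗮ` give `‖R − B‖² ≥ ∑ |σᵢ|² (1 - ‖P_K uᵢ‖²)`. The weights
`‖P_K uᵢ‖²` lie in `[0, 1]` and have sum at most `dim K`, so the right-hand side is smallest when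
they sit on the largest `σᵢ`; the truncation attains that value. -/

section Weights

variable {ι : Type*} {s : Finset ι} {μ w : ι → ℝ}

lemma exists_nonneg_threshold [Finite ι] (hμ : ∀ i, 0 ≤ μ i) (hs : ∀ i ∈ s, ∀ j ∉ s, μ j ≤ μ i) :
    ∃ t, 0 ≤ t ∧ (∀ i ∈ s, t ≤ μ i) ∧ ∀ j ∉ s, μ j ≤ t := by
  classical
  have := Fintype.ofFinite ι
  -- The supremum is taken in `ℝ≥0`, where it is `0` if `s` is everything.
  lift μ to ι → NNReal using hμ
  refine ⟨(sᶜ.sup μ : NNReal), NNReal.coe_nonneg _, fun i hi => ?_, fun j hj => ?_⟩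
  · exact NNReal.coe_le_coe.2 (Finset.sup_le fun j hj => hs i hi j (Finset.mem_compl.1 hj))
  · exact NNReal.coe_le_coe.2 (Finset.le_sup (Finset.mem_compl.2 hj))

lemma sum_mul_le_sum_of_sum_le_card [Fintype ι] (hμ : ∀ i, 0 ≤ μ i)
    (hs : ∀ i ∈ s, ∀ j ∉ s, μ j ≤ μ i) (hw0 : ∀ i, 0 ≤ w i) (hw1 : ∀ i, w i ≤ 1)
    (hw : ∑ i, w i ≤ s.card) :
    ∑ i, μ i * w i ≤ ∑ i ∈ s, μ i := by
  classical
  obtain ⟨t, ht0, hts, htc⟩ := exists_nonneg_threshold hμ hs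
  have exchange (i : ι) :
      μ i * w i ≤ (if i ∈ s then μ i else 0) + t * (w i - if i ∈ s then 1 else 0) := by
    split_ifs with hi
    · nlinarith [hts i hi, hw1 i]
    · nlinarith [htc i hi, hw0 i]
  calc ∑ i, μ i * w i
      ≤ ∑ i, ((if i ∈ s then μ i else 0) + t * (w i - if i ∈ s then 1 else 0)) :=
        Finset.sum_le_sum fun i _ => exchange i
    _ = ∑ i ∈ s, μ i + t * (∑ i, w i - s.card) := by
        simp [Finset.sum_add_distrib, ← Finset.mul_sum]
    _ ≤ ∑ i ∈ s, μ i :=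
        add_le_of_nonpos_right (mul_nonpos_of_nonneg_of_nonpos ht0 (sub_nonpos.2 hw))

end Weights

section Projection

variable {𝕜 E ι : Type*} [RCLike 𝕜] [NormedAddCommGroup E] [InnerProductSpace 𝕜 E]
  {u : ι → E} (K : Submodule 𝕜 E)

lemma norm_sub_smul_sq_of_inner_eq {a x : E} {ρ : 𝕜} (hρ : inner 𝕜 a x = ρ * ‖a‖ ^ 2) (b : 𝕜) :
    ‖x - b • a‖ ^ 2 = ‖x - ρ • a‖ ^ 2 + ‖a‖ ^ 2 * ‖ρ - b‖ ^ 2 := by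
  have orthogonal : inner 𝕜 (x - ρ • a) ((ρ - b) • a) = 0 := by
    rw [inner_smul_right, inner_eq_zero_symm.1, mul_zero]
    rw [inner_sub_right, inner_smul_right, inner_self_eq_norm_sq_to_K, hρ, sub_self]
  have split : x - b • a = (x - ρ • a) + (ρ - b) • a := by rw [sub_smul]; abel
  rw [split, sq, norm_add_sq_eq_norm_sq_add_norm_sq_of_inner_eq_zero _ _ orthogonal, norm_smul]
  ring

lemma norm_sq_sum_smul_of_orthonormal (hu : Orthonormal 𝕜 u) (c : ι → 𝕜) (s : Finset ι) :
    ‖∑ i ∈ s, c i • u i‖ ^ 2 = ∑ i ∈ s, ‖c i‖ ^ 2 := by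
  apply RCLike.ofReal_injective (K := 𝕜)
  push_cast
  rw [← inner_self_eq_norm_sq_to_K, hu.inner_sum]
  simp_rw [RCLike.conj_mul]

lemma sum_norm_sq_starProjection_le_finrank [FiniteDimensional 𝕜 K] (hu : Orthonormal 𝕜 u)
    (s : Finset ι) : ∑ i ∈ s, ‖K.starProjection (u i)‖ ^ 2 ≤ Module.finrank 𝕜 K := by
  let b := stdOrthonormalBasis 𝕜 K
  have expand (i : ι) : ‖K.starProjection (u i)‖ ^ 2 = ∑ k, ‖inner 𝕜 (u i) (b k : E)‖ ^ 2 := by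
    rw [Submodule.starProjection_apply, Submodule.norm_coe, ← b.sum_sq_norm_inner_left]
    simp only [Submodule.inner_orthogonalProjectionOnto_eq_of_mem_right]
  calc ∑ i ∈ s, ‖K.starProjection (u i)‖ ^ 2
      = ∑ k, ∑ i ∈ s, ‖inner 𝕜 (u i) (b k : E)‖ ^ 2 := by
        simp only [expand]
        exact Finset.sum_comm
    _ ≤ ∑ k, ‖(b k : E)‖ ^ 2 := Finset.sum_le_sum fun k _ => hu.sum_inner_products_le _
    _ = Module.finrank 𝕜 K := by simp [Submodule.norm_coe, b.orthonormal.1]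

lemma norm_sq_sub_norm_sq_starProjection_le [K.HasOrthogonalProjection] (x : E) {y : E}
    (hy : y ∈ K) : ‖x‖ ^ 2 - ‖K.starProjection x‖ ^ 2 ≤ ‖x - y‖ ^ 2 := by
  have hy' : Kᗮ.starProjection y = 0 := by
    rw [Submodule.starProjection_apply_eq_zero_iff]
    exact K.le_orthogonal_orthogonal hy
  calc ‖x‖ ^ 2 - ‖K.starProjection x‖ ^ 2 = ‖Kᗮ.starProjection (x - y)‖ ^ 2 := by
        rw [map_sub, hy', sub_zero, K.norm_sq_eq_add_norm_sq_starProjection x, add_sub_cancel_left]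
    _ ≤ ‖x - y‖ ^ 2 := by
        gcongr
        exact Submodule.norm_starProjection_apply_le _ _

variable [Fintype ι] [DecidableEq ι] {K}

lemma sum_compl_norm_sq_le_sum_norm_sq_smul_sub [FiniteDimensional 𝕜 K] (hu : Orthonormal 𝕜 u)
    {σ : ι → 𝕜} {s : Finset ι} (hs : ∀ i ∈ s, ∀ j ∉ s, ‖σ j‖ ≤ ‖σ i‖)
    (hK : Module.finrank 𝕜 K ≤ s.card) {y : ι → E} (hy : ∀ i, y i ∈ K) :
    ∑ i ∈ sᶜ, ‖σ i‖ ^ 2 ≤ ∑ i, ‖σ i • u i - y i‖ ^ 2 := by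
  have weights_le : ∑ i, ‖σ i‖ ^ 2 * ‖K.starProjection (u i)‖ ^ 2 ≤ ∑ i ∈ s, ‖σ i‖ ^ 2 := by
    refine sum_mul_le_sum_of_sum_le_card (fun i => sq_nonneg _)
      (fun i hi j hj => pow_le_pow_left₀ (norm_nonneg _) (hs i hi j hj) 2)
      (fun i => sq_nonneg _) (fun i => ?_) ?_
    · have := K.norm_starProjection_apply_le (u i)
      rw [hu.1 i] at this
      exact pow_le_one₀ (norm_nonneg _) this
    · exact (sum_norm_sq_starProjection_le_finrank K hu _).trans (Nat.cast_le.2 hK)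
  calc ∑ i ∈ sᶜ, ‖σ i‖ ^ 2
      = ∑ i, ‖σ i‖ ^ 2 - ∑ i ∈ s, ‖σ i‖ ^ 2 := by rw [← Finset.sum_add_sum_compl s]; ring
    _ ≤ ∑ i, ‖σ i‖ ^ 2 - ∑ i, ‖σ i‖ ^ 2 * ‖K.starProjection (u i)‖ ^ 2 := by gcongr
    _ = ∑ i, (‖σ i • u i‖ ^ 2 - ‖K.starProjection (σ i • u i)‖ ^ 2) := by
        simp [norm_smul, mul_pow, hu.1]
    _ ≤ ∑ i, ‖σ i • u i - y i‖ ^ 2 :=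
        Finset.sum_le_sum fun i _ => norm_sq_sub_norm_sq_starProjection_le K _ (hy i)

end Projection

section EuclideanSpace

variable {𝕜 m n ι : Type*} [RCLike 𝕜] [Fintype n]

lemma finrank_range_toEuclideanLin [Finite m] [DecidableEq n] (M : Matrix m n 𝕜) :
    Module.finrank 𝕜 (LinearMap.range M.toEuclideanLin) = M.rank := by
  rw [toEuclideanLin, toLpLin_eq_toLin, ← rank_eq_finrank_range_toLin]

lemma orthonormal_toLp_iff_star_dotProduct [DecidableEq ι] {u : ι → n → 𝕜} :
    Orthonormal 𝕜 (fun i => WithLp.toLp 2 (u i)) ↔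
      ∀ i j, star (u i) ⬝ᵥ u j = if i = j then 1 else 0 := by
  simp_rw [orthonormal_iff_ite, EuclideanSpace.inner_toLp_toLp, dotProduct_comm]

end EuclideanSpace

section Frobenius

variable {m n : Type*} [Fintype m] [Fintype n]

lemma frobSq_nonneg (M : Matrix m n ℂ) : 0 ≤ frobSq M :=
  Finset.sum_nonneg fun _ _ => Finset.sum_nonneg fun _ _ => Complex.normSq_nonneg _

lemma frobSq_eq_sum_norm_sq_row (M : Matrix m n ℂ) :
    frobSq M = ∑ i, ‖WithLp.toLp 2 (M.row i)‖ ^ 2 := by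
  simp [frobSq, EuclideanSpace.norm_sq_eq, Complex.normSq_eq_norm_sq]

lemma frobSq_eq_sum_norm_sq_col (M : Matrix m n ℂ) :
    frobSq M = ∑ j, ‖WithLp.toLp 2 (M.col j)‖ ^ 2 := by
  rw [frobSq, Finset.sum_comm]
  simp [EuclideanSpace.norm_sq_eq, Complex.normSq_eq_norm_sq]

lemma frobSq_eq_zero_iff {M : Matrix m n ℂ} : frobSq M = 0 ↔ M = 0 := by
  rw [frobSq_eq_sum_norm_sq_row, Finset.sum_eq_zero_iff_of_nonneg fun _ _ => sq_nonneg _]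
  simp [funext_iff, ← Matrix.ext_iff]

lemma sum_norm_sq_toEuclideanLin_le_frobSq [DecidableEq n] {ι : Type*}
    {v : ι → EuclideanSpace ℂ n} (hv : Orthonormal ℂ v) (s : Finset ι) (M : Matrix m n ℂ) :
    ∑ i ∈ s, ‖M.toEuclideanLin (v i)‖ ^ 2 ≤ frobSq M := by
  let conjRow (a : m) : EuclideanSpace ℂ n := WithLp.toLp 2 (star (M.row a))
  have apply_eq_inner (i : ι) (a : m) : M.toEuclideanLin (v i) a = inner ℂ (conjRow a) (v i) := by
    simp [conjRow, EuclideanSpace.inner_eq_star_dotProduct, toLpLin_apply, mulVec, row_def,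
      dotProduct_comm]
  calc ∑ i ∈ s, ‖M.toEuclideanLin (v i)‖ ^ 2
      = ∑ a, ∑ i ∈ s, ‖inner ℂ (v i) (conjRow a)‖ ^ 2 := by
        simp_rw [EuclideanSpace.norm_sq_eq, apply_eq_inner, norm_inner_symm (conjRow _)]
        exact Finset.sum_comm
    _ ≤ ∑ a, ‖conjRow a‖ ^ 2 := Finset.sum_le_sum fun a _ => hv.sum_inner_products_le _
    _ = frobSq M := by simp [frobSq_eq_sum_norm_sq_row, EuclideanSpace.norm_sq_eq, conjRow]

end Frobenius

section EckartYoung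

variable {m n ι : Type*} {u : ι → EuclideanSpace ℂ m} {v : ι → EuclideanSpace ℂ n} {σ : ι → ℂ}

/-- The matrix `∑ i ∈ s, σ i • u i (v i)ᴴ`. For orthonormal `u` and `v` this is the part of a
singular value decomposition (an eigendecomposition if `u = v`) selected by `s`; the coefficients
may be arbitrary complex numbers. -/
noncomputable def rankOneSum (σ : ι → ℂ) (u : ι → EuclideanSpace ℂ m) (v : ι → EuclideanSpace ℂ n)
    (s : Finset ι) : Matrix m n ℂ :=
  ∑ i ∈ s, σ i • vecMulVec (u i) (star (v i))

lemma rankOneSum_univ_sub [Fintype ι] [DecidableEq ι] (s : Finset ι) :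
    rankOneSum σ u v Finset.univ - rankOneSum σ u v s = rankOneSum σ u v sᶜ := by
  rw [sub_eq_iff_eq_add']
  exact (Finset.sum_add_sum_compl s _).symm

lemma toEuclideanLin_rankOneSum_univ_apply [Fintype ι] [Fintype n] [DecidableEq n]
    (hv : Orthonormal ℂ v) (j : ι) :
    (rankOneSum σ u v Finset.univ).toEuclideanLin (v j) = σ j • u j := by
  classical
  have dotProduct_eq (i : ι) : star (v i).ofLp ⬝ᵥ (v j).ofLp = if i = j then 1 else 0 :=
    orthonormal_toLp_iff_star_dotProduct.1 hv i j
  simp [rankOneSum, toLpLin_apply, vecMulVec_mulVec, dotProduct_eq, apply_ite (WithLp.toLp 2)]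

variable [Fintype m] [Fintype n]

lemma frobSq_rankOneSum (hu : Orthonormal ℂ u) (hv : ∀ i, ‖v i‖ = 1) (s : Finset ι) :
    frobSq (rankOneSum σ u v s) = ∑ i ∈ s, ‖σ i‖ ^ 2 := by
  have col_eq (j : n) : WithLp.toLp 2 ((rankOneSum σ u v s).col j) =
      ∑ i ∈ s, (σ i * star (v i j)) • u i := by
    ext a
    simp [rankOneSum, Matrix.sum_apply, vecMulVec_apply, mul_assoc, mul_comm (u _ a)]
  have norm_sq_col (j : n) : ‖WithLp.toLp 2 ((rankOneSum σ u v s).col j)‖ ^ 2 =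
      ∑ i ∈ s, ‖σ i‖ ^ 2 * ‖v i j‖ ^ 2 := by
    simp_rw [col_eq, norm_sq_sum_smul_of_orthonormal hu, norm_mul, norm_star, mul_pow]
  simp_rw [frobSq_eq_sum_norm_sq_col, norm_sq_col]
  rw [Finset.sum_comm]
  simp_rw [← Finset.mul_sum, ← EuclideanSpace.norm_sq_eq, hv, one_pow, mul_one]

theorem frobSq_sub_rankOneSum_le_of_rank_le_card [Fintype ι] (hu : Orthonormal ℂ u)
    (hv : Orthonormal ℂ v) {s : Finset ι} (hs : ∀ i ∈ s, ∀ j ∉ s, ‖σ j‖ ≤ ‖σ i‖)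
    {B : Matrix m n ℂ} (hB : B.rank ≤ s.card) :
    frobSq (rankOneSum σ u v Finset.univ - rankOneSum σ u v s) ≤
      frobSq (rankOneSum σ u v Finset.univ - B) := by
  classical
  calc frobSq (rankOneSum σ u v Finset.univ - rankOneSum σ u v s)
      = ∑ i ∈ sᶜ, ‖σ i‖ ^ 2 := by rw [rankOneSum_univ_sub, frobSq_rankOneSum hu hv.1]
    _ ≤ ∑ i, ‖σ i • u i - B.toEuclideanLin (v i)‖ ^ 2 :=
        sum_compl_norm_sq_le_sum_norm_sq_smul_sub hu hs
          ((finrank_range_toEuclideanLin B).trans_le hB) fun i => LinearMap.mem_range_self _ _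
    _ = ∑ i, ‖(rankOneSum σ u v Finset.univ - B).toEuclideanLin (v i)‖ ^ 2 := by
        simp_rw [map_sub, LinearMap.sub_apply, toEuclideanLin_rankOneSum_univ_apply hv]
    _ ≤ frobSq (rankOneSum σ u v Finset.univ - B) :=
        sum_norm_sq_toEuclideanLin_le_frobSq hv _ _

end EckartYoung

section Kronecker

variable {l m k n : Type*} [Fintype l] [Fintype m]

/-- The matrix `(∑ i j, conj (a i j) S(i, j)) / ‖A‖²`, where `S(i, j)` is the `(i, j)`-th block of
`S`: the least-squares solution `B` of `S ≈ A ⊗ B`. It is `0` if `A = 0`. -/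
noncomputable def kroneckerCoeff (A : Matrix l m ℂ) (S : Matrix (l × k) (m × n) ℂ) :
    Matrix k n ℂ :=
  (frobSq A : ℂ)⁻¹ • ∑ i, ∑ j, starRingEnd ℂ (A i j) • S.submatrix (Prod.mk i) (Prod.mk j)

/-- The entries of `M` in position `(a, b)` of each block, as a Euclidean vector. -/
def blockEntries (M : Matrix (l × k) (m × n) ℂ) (a : k) (b : n) : EuclideanSpace ℂ (l × m) :=
  WithLp.toLp 2 fun ij => M (ij.1, a) (ij.2, b)

variable [Fintype k] [Fintype n]

lemma frobSq_eq_sum_norm_sq_blockEntries (M : Matrix (l × k) (m × n) ℂ) :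
    frobSq M = ∑ a, ∑ b, ‖blockEntries M a b‖ ^ 2 := by
  have swap (f : l × k → m × n → ℝ) :
      ∑ x, ∑ y, f x y = ∑ a, ∑ b, ∑ ij : l × m, f (ij.1, a) (ij.2, b) := by
    calc ∑ x, ∑ y, f x y = ∑ a, ∑ i, ∑ b, ∑ j, f (i, a) (j, b) := by
          simp_rw [Fintype.sum_prod_type_right]
      _ = ∑ a, ∑ b, ∑ i, ∑ j, f (i, a) (j, b) := Finset.sum_congr rfl fun a _ => Finset.sum_comm
      _ = ∑ a, ∑ b, ∑ ij : l × m, f (ij.1, a) (ij.2, b) := by simp_rw [Fintype.sum_prod_type]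
  simp [frobSq, blockEntries, EuclideanSpace.norm_sq_eq, Complex.normSq_eq_norm_sq, swap]

lemma frobSq_sub_kronecker {A : Matrix l m ℂ} (hA : A ≠ 0) (S : Matrix (l × k) (m × n) ℂ)
    (B : Matrix k n ℂ) :
    frobSq (S - A ⊗ₖ B) =
      frobSq (S - A ⊗ₖ kroneckerCoeff A S) + frobSq A * frobSq (kroneckerCoeff A S - B) := by
  let vecA : EuclideanSpace ℂ (l × m) := WithLp.toLp 2 fun ij => A ij.1 ij.2
  have norm_sq_vecA : ‖vecA‖ ^ 2 = frobSq A := by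
    simp [vecA, EuclideanSpace.norm_sq_eq, frobSq, Complex.normSq_eq_norm_sq,
      Fintype.sum_prod_type]
  have blockEntries_sub (C : Matrix k n ℂ) (a : k) (b : n) :
      blockEntries (S - A ⊗ₖ C) a b = blockEntries S a b - C a b • vecA := by
    ext ij
    simp [blockEntries, vecA, mul_comm]
  have normal_equation (a : k) (b : n) :
      inner ℂ vecA (blockEntries S a b) = kroneckerCoeff A S a b * ‖vecA‖ ^ 2 := by
    have : (frobSq A : ℂ) ≠ 0 := Complex.ofReal_ne_zero.2 (frobSq_eq_zero_iff.not.2 hA)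
    rw [← Complex.ofReal_pow, norm_sq_vecA]
    simp [kroneckerCoeff, Matrix.sum_apply, PiLp.inner_apply, vecA, blockEntries, this,
      Fintype.sum_prod_type, mul_comm]
  simp_rw [frobSq_eq_sum_norm_sq_blockEntries, blockEntries_sub,
    norm_sub_smul_sq_of_inner_eq (normal_equation _ _) (B _ _), Finset.sum_add_distrib,
    ← Finset.mul_sum, norm_sq_vecA]
  simp [frobSq, Complex.normSq_eq_norm_sq]

end Kronecker

lemma le_of_mem_filter_val_lt_of_notMem {q : ℕ} {α : Type*} [Preorder α] {f : Fin q → α}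
    (hf : Antitone f) (r : ℕ) :
    ∀ i ∈ Finset.univ.filter (fun i : Fin q => (i : ℕ) < r),
      ∀ j ∉ Finset.univ.filter (fun i : Fin q => (i : ℕ) < r), f j ≤ f i := by
  intro i hi j hj
  simp only [Finset.mem_filter, Finset.mem_univ, true_and, not_lt] at hi hj
  exact hf (Fin.le_def.2 (hi.le.trans hj))

theorem eig_truncation_RB_minimizes_general {l m k n ι : Type*} [Fintype l] [Fintype m] [Fintype k]
    [Fintype n] [Fintype ι] (S : Matrix (l × k) (m × n) ℂ) (A : Matrix l m ℂ) (hA : A ≠ 0)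
    {σ : ι → ℂ} {u : ι → EuclideanSpace ℂ k} {v : ι → EuclideanSpace ℂ n} (hu : Orthonormal ℂ u)
    (hv : Orthonormal ℂ v) (hdec : kroneckerCoeff A S = rankOneSum σ u v Finset.univ)
    {s : Finset ι} (hs : ∀ i ∈ s, ∀ j ∉ s, ‖σ j‖ ≤ ‖σ i‖)
    {B : Matrix k n ℂ} (hB : B.rank ≤ s.card) :
    √(frobSq (S - A ⊗ₖ rankOneSum σ u v s)) ≤ √(frobSq (S - A ⊗ₖ B)) := by
  rw [frobSq_sub_kronecker hA S B, frobSq_sub_kronecker hA S (rankOneSum σ u v s), hdec]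
  gcongr
  · exact frobSq_nonneg A
  · exact frobSq_sub_rankOneSum_le_of_rank_le_card hu hv hs hB

/-- B-step optimality of LR-Kron: for S, A Hermitian PSD with A ≠ 0, the rank-r_b
eigentruncation B̂ = EIG_{r_b}(R_B) of R_B = (Σᵢⱼ conj(aᵢⱼ)S(i,j))/‖A‖_F² minimizes
‖S − A⊗B‖_F over all B of rank at most r_b. -/
theorem eig_truncation_RB_minimizes {p q : ℕ}
    (S : Matrix (Fin p × Fin q) (Fin p × Fin q) ℂ) (hS : S.PosSemidef)
    (A : Matrix (Fin p) (Fin p) ℂ) (hA : A.PosSemidef) (hA0 : A ≠ 0)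
    (rb : ℕ) (hrb1 : 1 ≤ rb) (hrbq : rb ≤ q)
    (RB : Matrix (Fin q) (Fin q) ℂ)
    (hRB : RB = ((frobSq A : ℂ))⁻¹ • ∑ i, ∑ j, (starRingEnd ℂ) (A i j) • blk S i j)
    (hRBpsd : RB.PosSemidef)
    (lam : Fin q → ℝ) (u : Fin q → Fin q → ℂ)
    (hanti : Antitone lam) (hnonneg : ∀ i, 0 ≤ lam i)
    (horth : ∀ i j, star (u i) ⬝ᵥ u j = if i = j then 1 else 0)
    (hdec : RB = ∑ i, (lam i : ℂ) • Matrix.vecMulVec (u i) (star (u i)))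
    (Bhat : Matrix (Fin q) (Fin q) ℂ)
    (hBhat : Bhat = ∑ i ∈ Finset.univ.filter (fun i : Fin q => (i : ℕ) < rb),
      (lam i : ℂ) • Matrix.vecMulVec (u i) (star (u i))) :
    ∀ B : Matrix (Fin q) (Fin q) ℂ, B.rank ≤ rb →
      Real.sqrt (frobSq (S - A ⊗ₖ Bhat)) ≤ Real.sqrt (frobSq (S - A ⊗ₖ B)) := by
  subst hRB hBhat
  have hu := orthonormal_toLp_iff_star_dotProduct.2 horth
  have hnorm : Antitone fun i => ‖(lam i : ℂ)‖ := by simpa [abs_of_nonneg, hnonneg] using hanti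
  have hcard := (Fin.card_filter_val_lt (n := q) (m := rb)).trans (min_eq_right hrbq)
  exact fun B hB => eig_truncation_RB_minimizes_general S A hA0 hu hu hdec
    (le_of_mem_filter_val_lt_of_notMem hnorm rb) (hB.trans_eq hcard.symm)
end
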